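/- arXiv:1612.01732 — 4 statements merged into one kernel-verified Lean document; each statement's English description precedes it below -/
import Mathlib

section
/- Suppose Λ is a finite simple graph whose complement Λᶜ is a linear forest, Γ is a finite simple graph, and v is a vertex of Γ. If Λ embeds into the double D_v(Γ) of Γ along the star of v as a full (induced) subgraph, then Λ embeds into Γ as a full (induced) subgraph. -/
open SimpleGraph

/-- The set of commutator relations of a graph: one commutator for each edge. -/
def raagRels {V : Type} (G : SimpleGraph V) : Set (FreeGroup V) :=
  {r | ∃ u v : V, G.Adj u v ∧
    r = FreeGroup.of u * FreeGroup.of v * (FreeGroup.of u)⁻¹ * (FreeGroup.of v)⁻¹}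

/-- The right-angled Artin group `A(G)` of a graph `G`. -/
abbrev RAAG {V : Type} (G : SimpleGraph V) : Type := PresentedGroup (raagRels G)

/-- `G(Γ) = A(Γᶜ)`, the RAAG on the complement graph. -/
abbrev GG {V : Type} (G : SimpleGraph V) : Type := RAAG Gᶜ

/-- A linear forest: an acyclic graph all of whose vertices have degree at most 2. -/
def IsLinearForest {V : Type} (G : SimpleGraph V) : Prop :=
  G.IsAcyclic ∧ ∀ v : V, (G.neighborSet v).ncard ≤ 2

/-- The star of a vertex: the vertex together with its neighbours. -/
def starSet {V : Type} (G : SimpleGraph V) (v : V) : Set V :=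
  insert v (G.neighborSet v)

/-- The double `D_v(G)` of `G` along the star of `v`: original vertices together with
copies of the vertices outside the star. -/
def GraphDouble {V : Type} (G : SimpleGraph V) (v : V) :
    SimpleGraph (V ⊕ {w : V // w ∉ starSet G v}) :=
  SimpleGraph.fromRel (fun x y =>
    match x, y with
    | Sum.inl a, Sum.inl b => G.Adj a b
    | Sum.inr a, Sum.inr b => G.Adj a.1 b.1
    | Sum.inl a, Sum.inr b => a ∈ starSet G v ∧ G.Adj a b.1
    | Sum.inr _, Sum.inl _ => False)

/-- Subdivision of the edge `[v,w]` of `Λ`, with `none` as the new vertex. -/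
def SubdivEdge {V : Type} (Λ : SimpleGraph V) (v w : V) : SimpleGraph (Option V) :=
  SimpleGraph.fromRel (fun x y =>
    match x, y with
    | some a, some b => Λ.Adj a b ∧ ¬((a = v ∧ b = w) ∨ (a = w ∧ b = v))
    | some a, none => a = v ∨ a = w
    | none, some _ => False
    | none, none => False)

/-- The graph `Λ_u⁻(w₁,w₂)`, with `none` as the new vertex `v`. -/
def MinusGraph {V : Type} (Λ : SimpleGraph V) (u w₁ w₂ : V) : SimpleGraph (Option V) :=
  SimpleGraph.fromRel (fun x y =>
    match x, y with
    | some a, some b => Λ.Adj a b ∧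
        ¬((a = u ∧ b = w₁) ∨ (a = w₁ ∧ b = u) ∨ (a = u ∧ b = w₂) ∨ (a = w₂ ∧ b = u))
    | some a, none => a = w₁ ∨ a = u ∨ a = w₂
    | none, some _ => False
    | none, none => False)

/-- The graph `Λ_u⁺(w₁,w₂)`: `Λ_u⁻(w₁,w₂)` with the edge `[u,w₂]` added back. -/
def PlusGraph {V : Type} (Λ : SimpleGraph V) (u w₁ w₂ : V) : SimpleGraph (Option V) :=
  SimpleGraph.fromRel (fun x y =>
    (MinusGraph Λ u w₁ w₂).Adj x y ∨ (x = some u ∧ y = some w₂))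

/-! Pass to complements. The complement of the double is `Γᶜ` with the neighbourhood of `v`
duplicated and the two copies of it completely joined to each other. Folding the copies together
maps `Λᶜ` to `Γᶜ`; it preserves adjacency and non-adjacency except between the set `A` of vertices
of `Λᶜ` lying in the original neighbourhood and the set `B` of those lying in its copy, and `Λᶜ`
contains the complete bipartite graph between `A` and `B`. As `Λᶜ` has no 4-cycle, one of `A` and
`B` has at most one element, say `A ⊆ {a}`. If all neighbours of `a` lie in `B`, then sending `a` to
`v` instead repairs the folding. Otherwise the degree bound leaves at most one edge `ab` between `A`
and `B`. If the folding destroys it, then `v`, which is adjacent to the images of `a` and `b` and to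
no others, takes the role of a vertex subdividing it, so `Γᶜ` contains an induced copy of `Λᶜ`
subdivided at `ab`. The part of `Λᶜ` beyond `b` is a path starting at `b`; moving it one step
towards `a` embeds `Λᶜ` in this subdivision. -/

section AcyclicGraphs

variable {V : Type*} {G : SimpleGraph V}

theorem eq_or_eq_or_eq_of_encard_le_two {s : Set V} (hs : s.encard ≤ 2) {x y z : V}
    (hx : x ∈ s) (hy : y ∈ s) (hz : z ∈ s) : x = y ∨ x = z ∨ y = z := by
  by_contra! h
  obtain ⟨hxy, hxz, hyz⟩ := h
  have hthree : ({x, y, z} : Set V).encard = 3 :=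
    Set.encard_eq_three.mpr ⟨x, y, z, hxy, hxz, hyz, rfl⟩
  have hsub : ({x, y, z} : Set V) ⊆ s := by
    rintro t (rfl | rfl | rfl) <;> assumption
  have hle : (3 : ℕ∞) ≤ 2 := hthree ▸ (Set.encard_le_encard hsub).trans hs
  exact absurd hle (by decide)

theorem not_adj_of_cliqueFree_three (hG : G.CliqueFree 3) {x y z : V}
    (hxy : G.Adj x y) (hyz : G.Adj y z) : ¬ G.Adj x z := by
  classical
  exact fun hxz => hG {x, y, z} (is3Clique_triple_iff.mpr ⟨hxy, hxz, hyz⟩)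

theorem not_isCompleteBetween_of_isAcyclic (hG : G.IsAcyclic) {A B : Set V}
    (hA : A.Nontrivial) (hB : B.Nontrivial) : ¬ G.IsCompleteBetween A B := by
  intro hAB
  obtain ⟨a, ha, a', ha', haa'⟩ := hA
  obtain ⟨b, hb, b', hb', hbb'⟩ := hB
  have hbridge := isAcyclic_iff_forall_adj_isBridge.mp hG (hAB ha hb)
  have hedge := isBridge_iff_forall_walk_mem_edges.mp hbridge
    (.cons (hAB ha hb') (.cons (hAB ha' hb').symm (.cons (hAB ha' hb) .nil)))
  simp [haa', hbb', (hAB ha hb).ne, (hAB ha hb').ne] at hedge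

end AcyclicGraphs

section Embeddings

variable {U V : Type*} {H : SimpleGraph U} {G : SimpleGraph V}

theorem nonempty_embedding_of_induce_compl_singleton {a : U} {v : V} (f : H.induce {a}ᶜ ↪g G)
    (hv : ∀ x, f x ≠ v)
    (hadj : ∀ x, G.Adj v (f x) ↔ H.Adj a x) : Nonempty (H ↪g G) := by
  classical
  let g : U → V := fun x => if hx : x = a then v else f ⟨x, hx⟩
  have g_self : g a = v := dif_pos rfl
  have g_of_ne : ∀ {x} (hx : x ≠ a), g x = f ⟨x, hx⟩ := fun hx => dif_neg hx
  refine ⟨⟨⟨g, fun x y hxy => ?_⟩, fun {x y} => ?_⟩⟩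
  · by_cases hx : x = a <;> by_cases hy : y = a
    · rw [hx, hy]
    · rw [hx, g_self, g_of_ne hy] at hxy
      exact absurd hxy.symm (hv _)
    · rw [hy, g_self, g_of_ne hx] at hxy
      exact absurd hxy (hv _)
    · rw [g_of_ne hx, g_of_ne hy] at hxy
      exact congrArg Subtype.val (f.injective hxy)
  · change G.Adj (g x) (g y) ↔ H.Adj x y
    by_cases hx : x = a <;> by_cases hy : y = a
    · simp [hx, hy]
    · rw [hx, g_self, g_of_ne hy, hadj]
    · rw [hy, g_self, g_of_ne hx, adj_comm, hadj, adj_comm]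
    · rw [g_of_ne hx, g_of_ne hy, f.map_adj_iff, induce_adj]

end Embeddings

section Ray

variable {V : Type*} {G : SimpleGraph V} {b x y : V}

theorem exists_adj_dist_add_one_eq (hx : G.Reachable b x) (hne : x ≠ b) :
    ∃ z, G.Adj x z ∧ G.dist b z + 1 = G.dist b x := by
  obtain ⟨p, hp⟩ := hx.symm.exists_walk_length_eq_dist
  cases p with
  | nil => exact absurd rfl hne
  | cons hadj q =>
    refine ⟨_, hadj, ?_⟩
    rw [Walk.length_cons, dist_comm] at hp
    have hle := dist_le q
    have htri := hadj.diff_dist_adj (u := b)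
    rw [dist_comm] at hle
    omega

theorem dist_injOn_reachable (hb : (G.neighborSet b).encard ≤ 1)
    (hdeg : ∀ x, (G.neighborSet x).encard ≤ 2) :
    Set.InjOn (G.dist b) {x | G.Reachable b x} := by
  suffices h : ∀ n x y, G.Reachable b x → G.Reachable b y →
      G.dist b x = n → G.dist b y = n → x = y from
    fun x hx y hy hxy => h _ x y hx hy rfl hxy.symm
  intro n
  induction n with
  | zero =>
    intro x y hx hy hx0 hy0
    rw [← hx.dist_eq_zero_iff.mp hx0, hy.dist_eq_zero_iff.mp hy0]
  | succ n ih =>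
    intro x y hx hy hxn hyn
    have ne_base : ∀ {z m}, G.dist b z = m + 1 → z ≠ b := by
      rintro z m hz rfl
      simp at hz
    obtain ⟨p, hxp, hp⟩ := exists_adj_dist_add_one_eq hx (ne_base hxn)
    obtain ⟨q, hyq, hq⟩ := exists_adj_dist_add_one_eq hy (ne_base hyn)
    have hbp : G.Reachable b p := hx.trans hxp.reachable
    obtain rfl : p = q := ih p q hbp (hy.trans hyq.reachable) (by omega) (by omega)
    by_cases hpb : p = b
    · subst hpb
      exact Set.encard_le_one_iff.mp hb x y hxp.symm hyq.symm
    · obtain ⟨r, hpr, hr⟩ := exists_adj_dist_add_one_eq hbp hpb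
      rcases eq_or_eq_or_eq_of_encard_le_two (hdeg p) hxp.symm hyq.symm hpr with h | rfl | rfl
      · exact h
      all_goals omega

theorem adj_iff_dist_eq_add_one (hb : (G.neighborSet b).encard ≤ 1)
    (hdeg : ∀ x, (G.neighborSet x).encard ≤ 2)
    (hx : G.Reachable b x) (hy : G.Reachable b y) :
    G.Adj x y ↔ G.dist b x + 1 = G.dist b y ∨ G.dist b y + 1 = G.dist b x := by
  have hinj := dist_injOn_reachable hb hdeg
  have adj_of_dist : ∀ {x y}, G.Reachable b x → G.Reachable b y →
      G.dist b x + 1 = G.dist b y → G.Adj x y := by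
    intro x y hx hy hxy
    have hyb : y ≠ b := by
      rintro rfl
      simp at hxy
    obtain ⟨z, hyz, hz⟩ := exists_adj_dist_add_one_eq hy hyb
    obtain rfl : z = x := hinj (hy.trans hyz.reachable) hx (by omega)
    exact hyz.symm
  constructor
  · intro hxy
    have hne : G.dist b x ≠ G.dist b y := fun h => hxy.ne (hinj hx hy h)
    have := hxy.diff_dist_adj (u := b)
    omega
  · rintro (h | h)
    · exact adj_of_dist hx hy h
    · exact (adj_of_dist hy hx h).symm

end Ray

section EdgeSide

variable {U : Type*} {L : SimpleGraph U} {a b x y : U}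

/-- The vertices on the side of `b` of the edge `ab`: those that can be reached from `b` without
using that edge. When `ab` is a bridge they form one of the two pieces into which removing `ab`
cuts its component. -/
def edgeSide (L : SimpleGraph U) (a b : U) : Set U :=
  {x | (L.deleteEdges {s(a, b)}).Reachable b x}

/-- The distance from `b` within the side of `b` of the edge `ab`; it has the junk value `0` off
`edgeSide L a b`. -/
noncomputable def edgeDepth (L : SimpleGraph U) (a b x : U) : ℕ :=
  (L.deleteEdges {s(a, b)}).dist b x

theorem right_mem_edgeSide : b ∈ edgeSide L a b :=
  Reachable.refl b

theorem left_notMem_edgeSide (hbridge : L.IsBridge s(a, b)) : a ∉ edgeSide L a b :=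
  fun h => hbridge (Reachable.symm h)

theorem mem_edgeSide_of_adj (hx : x ∈ edgeSide L a b) (h : (L.deleteEdges {s(a, b)}).Adj x y) :
    y ∈ edgeSide L a b :=
  Reachable.trans hx h.reachable

theorem edgeDepth_eq_zero_iff (hx : x ∈ edgeSide L a b) : edgeDepth L a b x = 0 ↔ x = b :=
  (Reachable.dist_eq_zero_iff hx).trans eq_comm

theorem adj_iff_of_notMem_edgeSide_of_mem (hab : L.Adj a b) (hx : x ∉ edgeSide L a b)
    (hy : y ∈ edgeSide L a b) : L.Adj x y ↔ x = a ∧ y = b := by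
  refine ⟨fun hxy => ?_, fun h => h.1 ▸ h.2 ▸ hab⟩
  have hedge : s(x, y) = s(a, b) := by
    by_contra h
    exact hx (mem_edgeSide_of_adj hy (deleteEdges_adj.mpr ⟨hxy, h⟩).symm)
  rcases Sym2.eq_iff.mp hedge with h | ⟨rfl, -⟩
  · exact h
  · exact absurd right_mem_edgeSide hx

theorem deleteEdges_adj_iff_of_mem_edgeSide_iff (hbridge : L.IsBridge s(a, b))
    (hxy : x ∈ edgeSide L a b ↔ y ∈ edgeSide L a b) :
    (L.deleteEdges {s(a, b)}).Adj x y ↔ L.Adj x y := by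
  have hne : s(x, y) ≠ s(a, b) := by
    intro h
    rcases Sym2.eq_iff.mp h with ⟨rfl, rfl⟩ | ⟨rfl, rfl⟩
    · exact left_notMem_edgeSide hbridge (hxy.mpr right_mem_edgeSide)
    · exact left_notMem_edgeSide hbridge (hxy.mp right_mem_edgeSide)
  simp [hne]

theorem encard_neighborSet_deleteEdges_le_one (hab : L.Adj a b)
    (hdeg : (L.neighborSet b).encard ≤ 2) :
    ((L.deleteEdges {s(a, b)}).neighborSet b).encard ≤ 1 := by
  rw [Set.encard_le_one_iff]
  intro x y hx hy
  rw [mem_neighborSet, deleteEdges_adj, Set.mem_singleton_iff, Sym2.eq_swap,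
    Sym2.congr_left] at hx hy
  rcases eq_or_eq_or_eq_of_encard_le_two hdeg hx.1 hy.1 hab.symm with h | h | h
  · exact h
  · exact absurd h hx.2
  · exact absurd h hy.2

theorem encard_neighborSet_deleteEdges_le (s : Set (Sym2 U)) (x : U) :
    ((L.deleteEdges s).neighborSet x).encard ≤ (L.neighborSet x).encard :=
  Set.encard_le_encard fun _ h => deleteEdges_le s h

theorem edgeDepth_injOn_edgeSide (hab : L.Adj a b) (hdeg : ∀ x, (L.neighborSet x).encard ≤ 2) :
    Set.InjOn (edgeDepth L a b) (edgeSide L a b) :=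
  dist_injOn_reachable (encard_neighborSet_deleteEdges_le_one hab (hdeg b))
    fun x => (encard_neighborSet_deleteEdges_le _ x).trans (hdeg x)

theorem deleteEdges_adj_iff_edgeDepth (hab : L.Adj a b)
    (hdeg : ∀ x, (L.neighborSet x).encard ≤ 2)
    (hx : x ∈ edgeSide L a b) (hy : y ∈ edgeSide L a b) :
    (L.deleteEdges {s(a, b)}).Adj x y ↔
      edgeDepth L a b x + 1 = edgeDepth L a b y ∨ edgeDepth L a b y + 1 = edgeDepth L a b x :=
  adj_iff_dist_eq_add_one (encard_neighborSet_deleteEdges_le_one hab (hdeg b))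
    (fun x => (encard_neighborSet_deleteEdges_le _ x).trans (hdeg x)) hx hy

end EdgeSide

section Subdivision

variable {U : Type} {L : SimpleGraph U} {a b x y : U} {s t : Option U}

theorem subdivEdge_adj_some_some :
    (SubdivEdge L a b).Adj (some x) (some y) ↔ (L.deleteEdges {s(a, b)}).Adj x y := by
  have hne : L.Adj x y → x ≠ y := Adj.ne
  simp only [SubdivEdge, fromRel_adj, deleteEdges_adj, Set.mem_singleton_iff, Sym2.eq_iff,
    L.adj_comm y x, ne_eq, Option.some.injEq]
  tauto

theorem subdivEdge_adj_some_none : (SubdivEdge L a b).Adj (some x) none ↔ x = a ∨ x = b := by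
  simp [SubdivEdge]

/-- The vertices of `SubdivEdge L a b` on the side of `b`, the new vertex `none` included. -/
def subdivSide (L : SimpleGraph U) (a b : U) : Set (Option U) :=
  {s | ∀ x ∈ s, x ∈ edgeSide L a b}

/-- The distance from the new vertex `none` of `SubdivEdge L a b` to a vertex on the side of `b`. -/
noncomputable def subdivDepth (L : SimpleGraph U) (a b : U) : Option U → ℕ
  | none => 0
  | some x => edgeDepth L a b x + 1

theorem subdivEdge_adj_some_none_iff_edgeDepth (hbridge : L.IsBridge s(a, b))
    (hx : x ∈ edgeSide L a b) :
    (SubdivEdge L a b).Adj (some x) none ↔ edgeDepth L a b x = 0 := by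
  have hxa : x ≠ a := by
    rintro rfl
    exact left_notMem_edgeSide hbridge hx
  rw [subdivEdge_adj_some_none, edgeDepth_eq_zero_iff hx, or_iff_right hxa]

theorem subdivEdge_adj_iff_subdivDepth (hab : L.Adj a b) (hbridge : L.IsBridge s(a, b))
    (hdeg : ∀ x, (L.neighborSet x).encard ≤ 2)
    (hs : s ∈ subdivSide L a b) (ht : t ∈ subdivSide L a b) :
    (SubdivEdge L a b).Adj s t ↔ subdivDepth L a b s + 1 = subdivDepth L a b t ∨
      subdivDepth L a b t + 1 = subdivDepth L a b s := by
  cases s with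
  | none =>
    cases t with
    | none => simp [subdivDepth]
    | some y =>
      rw [adj_comm, subdivEdge_adj_some_none_iff_edgeDepth hbridge (ht y rfl)]
      simp [subdivDepth, eq_comm]
  | some x =>
    cases t with
    | none =>
      rw [subdivEdge_adj_some_none_iff_edgeDepth hbridge (hs x rfl)]
      simp [subdivDepth, eq_comm]
    | some y =>
      rw [subdivEdge_adj_some_some, deleteEdges_adj_iff_edgeDepth hab hdeg (hs x rfl) (ht y rfl)]
      simp [subdivDepth]

theorem subdivEdge_adj_some_iff_of_notMem_edgeSide (hx : x ∉ edgeSide L a b)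
    (hs : s ∈ subdivSide L a b) :
    (SubdivEdge L a b).Adj (some x) s ↔ x = a ∧ subdivDepth L a b s = 0 := by
  cases s with
  | none =>
    have hxb : x ≠ b := by
      rintro rfl
      exact hx right_mem_edgeSide
    simp [subdivEdge_adj_some_none, subdivDepth, hxb]
  | some y =>
    have hnadj : ¬ (L.deleteEdges {s(a, b)}).Adj x y := fun hxy =>
      hx (mem_edgeSide_of_adj (hs y rfl) hxy.symm)
    exact iff_of_false (subdivEdge_adj_some_some.not.mpr hnadj) (by simp [subdivDepth])

theorem exists_mem_subdivSide_subdivDepth_eq (hx : x ∈ edgeSide L a b) :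
    ∃ s ∈ subdivSide L a b, subdivDepth L a b s = edgeDepth L a b x := by
  by_cases hxb : x = b
  · exact ⟨none, by simp [subdivSide], ((edgeDepth_eq_zero_iff hx).mpr hxb).symm⟩
  · obtain ⟨z, hxz, hz⟩ := exists_adj_dist_add_one_eq hx hxb
    refine ⟨some z, ?_, hz⟩
    rintro _ ⟨⟩
    exact mem_edgeSide_of_adj hx hxz

open Classical in
/-- Moves each vertex on the side of `b` of the edge `ab` one step towards `a` in
`SubdivEdge L a b`, so that `b` goes to the new vertex `none`, and fixes all other vertices. -/
noncomputable def subdivShift (L : SimpleGraph U) (a b x : U) : Option U :=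
  if hx : x ∈ edgeSide L a b then (exists_mem_subdivSide_subdivDepth_eq hx).choose else some x

theorem subdivShift_mem_subdivSide (hx : x ∈ edgeSide L a b) :
    subdivShift L a b x ∈ subdivSide L a b := by
  rw [subdivShift, dif_pos hx]
  exact (exists_mem_subdivSide_subdivDepth_eq hx).choose_spec.1

theorem subdivDepth_subdivShift (hx : x ∈ edgeSide L a b) :
    subdivDepth L a b (subdivShift L a b x) = edgeDepth L a b x := by
  rw [subdivShift, dif_pos hx]
  exact (exists_mem_subdivSide_subdivDepth_eq hx).choose_spec.2

theorem subdivShift_of_notMem (hx : x ∉ edgeSide L a b) : subdivShift L a b x = some x :=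
  dif_neg hx

theorem subdivShift_mem_subdivSide_iff :
    subdivShift L a b x ∈ subdivSide L a b ↔ x ∈ edgeSide L a b := by
  refine ⟨fun h => ?_, subdivShift_mem_subdivSide⟩
  by_contra hx
  exact hx (h x (subdivShift_of_notMem hx))

theorem subdivShift_injective (hab : L.Adj a b) (hdeg : ∀ x, (L.neighborSet x).encard ≤ 2) :
    Function.Injective (subdivShift L a b) := by
  intro x y hxy
  have hside : x ∈ edgeSide L a b ↔ y ∈ edgeSide L a b := by
    rw [← subdivShift_mem_subdivSide_iff, hxy, subdivShift_mem_subdivSide_iff]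
  by_cases hx : x ∈ edgeSide L a b
  · have hy := hside.mp hx
    refine edgeDepth_injOn_edgeSide hab hdeg hx hy ?_
    rw [← subdivDepth_subdivShift hx, hxy, subdivDepth_subdivShift hy]
  · rw [subdivShift_of_notMem hx, subdivShift_of_notMem (hside.not.mp hx)] at hxy
    exact Option.some.inj hxy

theorem subdivEdge_adj_subdivShift (hab : L.Adj a b) (hbridge : L.IsBridge s(a, b))
    (hdeg : ∀ x, (L.neighborSet x).encard ≤ 2) (x y : U) :
    (SubdivEdge L a b).Adj (subdivShift L a b x) (subdivShift L a b y) ↔ L.Adj x y := by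
  have across : ∀ {x y}, x ∉ edgeSide L a b → y ∈ edgeSide L a b →
      ((SubdivEdge L a b).Adj (subdivShift L a b x) (subdivShift L a b y) ↔ L.Adj x y) := by
    intro x y hx hy
    rw [subdivShift_of_notMem hx,
      subdivEdge_adj_some_iff_of_notMem_edgeSide hx (subdivShift_mem_subdivSide hy),
      subdivDepth_subdivShift hy, edgeDepth_eq_zero_iff hy,
      adj_iff_of_notMem_edgeSide_of_mem hab hx hy]
  by_cases hx : x ∈ edgeSide L a b <;> by_cases hy : y ∈ edgeSide L a b
  · rw [subdivEdge_adj_iff_subdivDepth hab hbridge hdeg (subdivShift_mem_subdivSide hx)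
        (subdivShift_mem_subdivSide hy),
      subdivDepth_subdivShift hx, subdivDepth_subdivShift hy,
      ← deleteEdges_adj_iff_edgeDepth hab hdeg hx hy,
      deleteEdges_adj_iff_of_mem_edgeSide_iff hbridge (iff_of_true hx hy)]
  · rw [adj_comm, across hy hx, adj_comm]
  · exact across hx hy
  · rw [subdivShift_of_notMem hx, subdivShift_of_notMem hy, subdivEdge_adj_some_some,
      deleteEdges_adj_iff_of_mem_edgeSide_iff hbridge (iff_of_false hx hy)]

/-- The embedding of a graph with vertices of degree at most two into its subdivision at a
bridge `ab`, given by shifting the side of `b` onto the new vertex. -/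
noncomputable def subdivShiftEmbedding (hab : L.Adj a b) (hbridge : L.IsBridge s(a, b))
    (hdeg : ∀ x, (L.neighborSet x).encard ≤ 2) : L ↪g SubdivEdge L a b where
  toFun := subdivShift L a b
  inj' := subdivShift_injective hab hdeg
  map_rel_iff' {x y} := subdivEdge_adj_subdivShift hab hbridge hdeg x y

end Subdivision

section Folding

variable {U V : Type*} {L : SimpleGraph U} {G : SimpleGraph V} {v : V} {π : U → V}
  {A B : Set U} {a b x y : U}

/-- One of `x`, `y` lies in `A` and the other in `B`. -/
def Crosses (A B : Set U) (x y : U) : Prop :=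
  x ∈ A ∧ y ∈ B ∨ x ∈ B ∧ y ∈ A

theorem crosses_singleton_iff : Crosses {a} {b} x y ↔ s(x, y) = s(a, b) := by
  simp [Crosses]

/-- The structure left on an induced subgraph `L` of the complement of the double of `Gᶜ` along the
star of `v` by the map `π` to `G` that identifies the two copies. The vertices over the neighbours
of `v` in `G` (that is, outside the star in `Gᶜ`) are split into the sets `A` and `B` of originals
and copies, which are joined completely in `L`; on all other pairs `π` is an induced embedding. -/
structure IsFolding (L : SimpleGraph U) (G : SimpleGraph V) (v : V) (π : U → V)
    (A B : Set U) : Prop where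
  adj_apply_iff : ∀ x, G.Adj v (π x) ↔ x ∈ A ∨ x ∈ B
  isCompleteBetween : L.IsCompleteBetween A B
  adj_iff : ∀ ⦃x y⦄, ¬ Crosses A B x y → (G.Adj (π x) (π y) ↔ L.Adj x y)
  eq_of_apply_eq : ∀ ⦃x y⦄, ¬ Crosses A B x y → π x = π y → x = y

namespace IsFolding

theorem swap (h : IsFolding L G v π A B) : IsFolding L G v π B A where
  adj_apply_iff x := (h.adj_apply_iff x).trans or_comm
  isCompleteBetween := h.isCompleteBetween.symm
  adj_iff _ _ hxy := h.adj_iff (hxy ∘ Or.symm)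
  eq_of_apply_eq _ _ hxy := h.eq_of_apply_eq (hxy ∘ Or.symm)

theorem comp_embedding {W : Type*} {K : SimpleGraph W} (h : IsFolding L G v π A B)
    (e : K ↪g L) : IsFolding K G v (π ∘ e) (e ⁻¹' A) (e ⁻¹' B) where
  adj_apply_iff x := h.adj_apply_iff (e x)
  isCompleteBetween _ hx _ hy := e.map_adj_iff.mp (h.isCompleteBetween hx hy)
  adj_iff _ _ hxy := (h.adj_iff hxy).trans e.map_adj_iff
  eq_of_apply_eq _ _ hxy heq := e.injective (h.eq_of_apply_eq hxy heq)

theorem adj_of_crosses (h : IsFolding L G v π A B) (hxy : Crosses A B x y) : L.Adj x y :=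
  hxy.elim (fun hxy => h.isCompleteBetween hxy.1 hxy.2)
    fun hxy => (h.isCompleteBetween hxy.2 hxy.1).symm

theorem nonempty_embedding_of_forall_adj (h : IsFolding L G v π A B)
    (hadj : ∀ x ∈ A, ∀ y ∈ B, G.Adj (π x) (π y)) : Nonempty (L ↪g G) := by
  have adj_of_crosses' : ∀ {x y}, Crosses A B x y → G.Adj (π x) (π y) := by
    rintro x y (⟨hx, hy⟩ | ⟨hx, hy⟩)
    · exact hadj x hx y hy
    · exact (hadj y hy x hx).symm
  refine ⟨⟨⟨π, fun x y hxy => ?_⟩, fun {x y} => ?_⟩⟩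
  · exact h.eq_of_apply_eq (fun hc => (adj_of_crosses' hc).ne hxy) hxy
  · by_cases hc : Crosses A B x y
    · exact iff_of_true (adj_of_crosses' hc) (h.adj_of_crosses hc)
    · exact h.adj_iff hc

theorem adj_of_apply_eq (h : IsFolding L G v π A B) (hx : π x = v) (hy : y ∈ A ∨ y ∈ B) :
    L.Adj x y := by
  have hxAB : ¬ (x ∈ A ∨ x ∈ B) := by
    rw [← h.adj_apply_iff, hx]
    exact G.irrefl
  have hxy : ¬ Crosses A B x y := fun hc => hxAB (hc.imp And.left And.left)
  rw [← h.adj_iff hxy, hx]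
  exact (h.adj_apply_iff y).mpr hy

theorem nonempty_embedding_of_neighborSet_subset (h : IsFolding L G v π {a} B)
    (hN : L.neighborSet a ⊆ B) : Nonempty (L ↪g G) := by
  have not_crosses (x y : ({a}ᶜ : Set U)) : ¬ Crosses {a} B (x : U) y := by
    rintro (⟨hxa, -⟩ | ⟨-, hya⟩)
    · exact x.2 hxa
    · exact y.2 hya
  have adj_apply (x : ({a}ᶜ : Set U)) : G.Adj v (π x) ↔ L.Adj a x := by
    rw [h.adj_apply_iff]
    exact ⟨fun hxB => h.isCompleteBetween rfl (hxB.resolve_left x.2), fun hax => .inr (hN hax)⟩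
  have apply_ne (x : ({a}ᶜ : Set U)) : π x ≠ v := by
    intro hxv
    have hax : L.Adj a x := (h.adj_of_apply_eq hxv (.inl rfl)).symm
    exact ((adj_apply x).mpr hax).ne hxv.symm
  let f : L.induce {a}ᶜ ↪g G :=
    { toFun x := π x
      inj' x y hxy := Subtype.ext (h.eq_of_apply_eq (not_crosses x y) hxy)
      map_rel_iff' {x y} := h.adj_iff (not_crosses x y) }
  exact nonempty_embedding_of_induce_compl_singleton f apply_ne adj_apply

theorem apply_ne (h : IsFolding L G v π A B) (hL : L.CliqueFree 3) (ha : a ∈ A) (hb : b ∈ B)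
    (x : U) : π x ≠ v := fun hx =>
  not_adj_of_cliqueFree_three hL (h.adj_of_apply_eq hx (.inl ha)) (h.isCompleteBetween ha hb)
    (h.adj_of_apply_eq hx (.inr hb))

theorem injective_of_forall_ne (h : IsFolding L G v π A B)
    (hne : ∀ x ∈ A, ∀ y ∈ B, π x ≠ π y) : Function.Injective π := by
  intro x y hxy
  refine h.eq_of_apply_eq ?_ hxy
  rintro (⟨hx, hy⟩ | ⟨hx, hy⟩)
  · exact hne x hx y hy hxy
  · exact hne y hy x hx hxy.symm

/-- If `π` fails to preserve only the edge `ab` and keeps its ends distinct, then `π` extends to an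
embedding of the subdivision of `L` at `ab`, with `v` as the image of the new vertex. -/
def subdivEdgeEmbedding {U : Type} {L : SimpleGraph U} {π : U → V} {a b : U}
    (h : IsFolding L G v π {a} {b}) (hL : L.CliqueFree 3) (hne : π a ≠ π b)
    (hnadj : ¬ G.Adj (π a) (π b)) : SubdivEdge L a b ↪g G where
  toFun s := s.elim v π
  inj' := by
    have hinj : Function.Injective π := h.injective_of_forall_ne (by rintro _ rfl _ rfl; exact hne)
    have hv := h.apply_ne hL rfl rfl
    rintro (_ | x) (_ | y) hxy
    · rfl
    · exact absurd hxy.symm (hv y)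
    · exact absurd hxy (hv x)
    · exact congrArg some (hinj hxy)
  map_rel_iff' := by
    have some_some (x y : U) : G.Adj (π x) (π y) ↔ (SubdivEdge L a b).Adj (some x) (some y) := by
      rw [subdivEdge_adj_some_some, deleteEdges_adj, Set.mem_singleton_iff]
      by_cases hc : s(x, y) = s(a, b)
      · refine iff_of_false ?_ fun h => h.2 hc
        rcases Sym2.eq_iff.mp hc with ⟨rfl, rfl⟩ | ⟨rfl, rfl⟩
        · exact hnadj
        · exact fun h => hnadj h.symm
      · rw [h.adj_iff (mt crosses_singleton_iff.mp hc), and_iff_left hc]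
    have some_none (x : U) : G.Adj (π x) v ↔ (SubdivEdge L a b).Adj (some x) none := by
      rw [subdivEdge_adj_some_none, adj_comm]
      exact h.adj_apply_iff x
    rintro (_ | x) (_ | y)
    · exact iff_of_false G.irrefl (SubdivEdge L a b).irrefl
    · exact (adj_comm ..).trans ((some_none y).trans (adj_comm ..))
    · exact some_none x
    · exact some_some x y

theorem apply_ne_of_adj (h : IsFolding L G v π {a} {b}) (hL : L.CliqueFree 3) {c : U}
    (hac : L.Adj a c) (hcb : c ≠ b) : π a ≠ π b := by
  have hab : L.Adj a b := h.isCompleteBetween rfl rfl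
  intro heq
  have hbc : L.Adj b c := by
    have hbc' : ¬ Crosses {a} {b} b c := by
      simp [Crosses, hac.ne', hcb]
    have hac' : ¬ Crosses {a} {b} a c := by
      simp [Crosses, hcb, hab.ne]
    rwa [← h.adj_iff hbc', ← heq, h.adj_iff hac']
  exact not_adj_of_cliqueFree_three hL hab hbc hac

theorem nonempty_embedding_of_singleton_left {U : Type} {L : SimpleGraph U} {π : U → V} {a : U}
    {B : Set U} (h : IsFolding L G v π {a} B) (hL : L.IsAcyclic)
    (hdeg : ∀ x, (L.neighborSet x).encard ≤ 2) : Nonempty (L ↪g G) := by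
  by_cases hN : L.neighborSet a ⊆ B
  · exact h.nonempty_embedding_of_neighborSet_subset hN
  obtain ⟨c, hac, hcB⟩ := Set.not_subset.mp hN
  have hB : B.Subsingleton := by
    intro b hb b' hb'
    rcases eq_or_eq_or_eq_of_encard_le_two (hdeg a) (h.isCompleteBetween rfl hb)
      (h.isCompleteBetween rfl hb') hac with hbb' | rfl | rfl
    · exact hbb'
    all_goals contradiction
  obtain rfl | ⟨b, rfl⟩ := hB.eq_empty_or_singleton
  · exact h.nonempty_embedding_of_forall_adj (by simp)
  by_cases hadj : G.Adj (π a) (π b)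
  · exact h.nonempty_embedding_of_forall_adj (by simpa using hadj)
  have hfree : L.CliqueFree 3 := hL.cliqueFree le_rfl
  have hab : L.Adj a b := h.isCompleteBetween rfl rfl
  have hbridge : L.IsBridge s(a, b) := isAcyclic_iff_forall_adj_isBridge.mp hL hab
  exact ⟨(h.subdivEdgeEmbedding hfree (h.apply_ne_of_adj hfree hac hcB) hadj).comp
    (subdivShiftEmbedding hab hbridge hdeg)⟩

theorem nonempty_embedding {U : Type} {L : SimpleGraph U} {π : U → V} {A B : Set U}
    (h : IsFolding L G v π A B) (hL : L.IsAcyclic)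
    (hdeg : ∀ x, (L.neighborSet x).encard ≤ 2) : Nonempty (L ↪g G) := by
  by_cases hA : A.Nontrivial
  · have hB : B.Subsingleton := Set.not_nontrivial_iff.mp fun hB =>
      not_isCompleteBetween_of_isAcyclic hL hA hB h.isCompleteBetween
    obtain rfl | ⟨b, rfl⟩ := hB.eq_empty_or_singleton
    · exact h.nonempty_embedding_of_forall_adj (by simp)
    · exact h.swap.nonempty_embedding_of_singleton_left hL hdeg
  · obtain rfl | ⟨a, rfl⟩ := (Set.not_nontrivial_iff.mp hA).eq_empty_or_singleton
    · exact h.nonempty_embedding_of_forall_adj (by simp)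
    · exact h.nonempty_embedding_of_singleton_left hL hdeg

end IsFolding

end Folding

section Double

variable {V : Type} {Γ : SimpleGraph V} {v : V}

theorem notMem_starSet_iff {w : V} : w ∉ starSet Γ v ↔ Γᶜ.Adj v w := by
  simp [starSet, eq_comm]

theorem compl_graphDouble_adj_inl_inl {x y : V} :
    (GraphDouble Γ v)ᶜ.Adj (.inl x) (.inl y) ↔ Γᶜ.Adj x y := by
  simp +contextual [GraphDouble, Γ.adj_comm y x]

theorem compl_graphDouble_adj_inr_inr {x y : {w : V // w ∉ starSet Γ v}} :
    (GraphDouble Γ v)ᶜ.Adj (.inr x) (.inr y) ↔ Γᶜ.Adj (x : V) y := by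
  simp +contextual [GraphDouble, Γ.adj_comm y x, Subtype.ext_iff]

theorem compl_graphDouble_adj_inl_inr {x : V} {y : {w : V // w ∉ starSet Γ v}} :
    (GraphDouble Γ v)ᶜ.Adj (.inl x) (.inr y) ↔ (x ∈ starSet Γ v → Γᶜ.Adj x y) := by
  have hne : x ∈ starSet Γ v → x ≠ y := fun hx hxy => y.2 (hxy ▸ hx)
  simp +contextual [GraphDouble, hne]

theorem isFolding_compl_graphDouble (Γ : SimpleGraph V) (v : V) :
    IsFolding (GraphDouble Γ v)ᶜ Γᶜ v (Sum.elim id Subtype.val) (Sum.inl '' (starSet Γ v)ᶜ)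
      (Set.range Sum.inr) where
  adj_apply_iff := by
    rintro (x | x)
    · exact notMem_starSet_iff.symm.trans (by simp)
    · exact iff_of_true (notMem_starSet_iff.mp x.2) (.inr ⟨x, rfl⟩)
  isCompleteBetween := by
    rintro _ ⟨x, hx, rfl⟩ _ ⟨y, rfl⟩
    exact compl_graphDouble_adj_inl_inr.mpr fun hx' => absurd hx' hx
  adj_iff := by
    rintro (x | x) (y | y) hxy
    · exact compl_graphDouble_adj_inl_inl.symm
    · have hx : x ∈ starSet Γ v := by simpa [Crosses] using hxy
      exact (compl_graphDouble_adj_inl_inr.trans (forall_prop_of_true hx)).symm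
    · have hy : y ∈ starSet Γ v := by simpa [Crosses] using hxy
      rw [adj_comm, adj_comm _ (Sum.inr x)]
      exact (compl_graphDouble_adj_inl_inr.trans (forall_prop_of_true hy)).symm
    · exact compl_graphDouble_adj_inr_inr.symm
  eq_of_apply_eq := by
    rintro (x | x) (y | y) hxy heq
    · exact congrArg Sum.inl heq
    · have hx : x ∈ starSet Γ v := by simpa [Crosses] using hxy
      have hxy' : x = y := heq
      exact absurd (hxy' ▸ hx) y.2
    · have hy : y ∈ starSet Γ v := by simpa [Crosses] using hxy
      have hxy' : x = y := heq
      exact absurd (hxy' ▸ hy) x.2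
    · exact congrArg Sum.inr (Subtype.ext heq)

end Double

theorem statement10_general {U V : Type} {Λ : SimpleGraph U} {Γ : SimpleGraph V}
    (hΛ : Λᶜ.IsAcyclic) (hdeg : ∀ x, (Λᶜ.neighborSet x).encard ≤ 2) (v : V)
    (h : Nonempty (Λ ↪g GraphDouble Γ v)) : Nonempty (Λ ↪g Γ) := by
  obtain ⟨f⟩ := h
  have hfold := (isFolding_compl_graphDouble Γ v).comp_embedding (Embedding.complEquiv f)
  exact (hfold.nonempty_embedding hΛ hdeg).map Embedding.complEquiv.symm

/-- If `Λᶜ` is a linear forest and `Λ` is an induced subgraph of the double `D_v(Γ)`,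
then `Λ` is an induced subgraph of `Γ`. -/
theorem statement10 {U V : Type} [Fintype U] [Fintype V]
    (Λ : SimpleGraph U) (Γ : SimpleGraph V) (hΛ : IsLinearForest Λᶜ) (v : V)
    (h : Nonempty (Λ ↪g GraphDouble Γ v)) :
    Nonempty (Λ ↪g Γ) := by
  have hdeg : ∀ x, (Λᶜ.neighborSet x).encard ≤ 2 := fun x => by
    rw [← (Set.toFinite _).cast_ncard_eq]
    exact_mod_cast hΛ.2 x
  exact statement10_general hΛ.1 hdeg v h
end

section
/- Let Λ be a finite simple graph and let [v,w] be an edge of Λ. Let Λ̄ be the graph obtained from Λ by subdividing the edge [v,w], i.e., Λ̄ has vertex set V(Λ) together with one new vertex u, and its edges are the edges of Λ other than [v,w], together with the two edges [v,u] and [u,w]. Then there is an injective group homomorphism from G(Λ) into G(Λ̄). -/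
open SimpleGraph

/-! Let `A = G(Λ)`, and let `φ : A → G(Λ̄)` conjugate `v` by the new vertex `u` and fix the other
generators. In the other direction, send `u` to the swap of the factors of `A × A`, `v` to `(1, v)`,
`w` to `(w, 1)` and every other `x` to `(x, x)`, which defines `ψ : G(Λ̄) → (A × A) ⋊ Aut(A × A)`:
the generators `v` and `w` commute in `G(Λ̄)` but not in `A`, so they are kept in different factors,
while `u` need only commute with the generators sent to the diagonal. As the swap turns `(1, v)`
into `(v, 1)`, the first coordinate of `ψ ∘ φ` is the identity of `A`. -/

namespace RAAG

variable {V : Type} {G : SimpleGraph V}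

theorem commute_of_adj {a b : V} (h : G.Adj a b) :
    Commute (PresentedGroup.of a : RAAG G) (PresentedGroup.of b) := by
  have hrel := PresentedGroup.one_of_mem (rels := raagRels G) ⟨a, b, h, rfl⟩
  simp only [map_mul, map_inv] at hrel
  exact mul_inv_eq_iff_eq_mul.mp (mul_inv_eq_one.mp hrel)

/-- The universal property of `A(G)`: a map from the vertices to a group extends to `A(G)` as soon
as the images of adjacent vertices commute. -/
def lift {H : Type*} [Group H] (f : V → H) (hf : ∀ a b, G.Adj a b → Commute (f a) (f b)) :
    RAAG G →* H :=
  PresentedGroup.toGroup (f := f) <| by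
    rintro _ ⟨a, b, hab, rfl⟩
    simp only [map_mul, map_inv, FreeGroup.lift_apply_of]
    rw [(hf a b hab).eq, mul_inv_cancel_right, mul_inv_cancel]

@[simp]
theorem lift_of {H : Type*} [Group H] (f : V → H) (hf : ∀ a b, G.Adj a b → Commute (f a) (f b))
    (a : V) : lift f hf (PresentedGroup.of a) = f a :=
  PresentedGroup.toGroup.of _

/-- The retraction of `A(G)` onto the subgroup generated by the vertices in `s`, as an endomorphism
of `A(G)`: it fixes these vertices and kills the others. -/
noncomputable def retraction (G : SimpleGraph V) (s : Set V) : RAAG G →* RAAG G :=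
  lift (s.mulIndicator PresentedGroup.of) fun a b hab => by
    by_cases ha : a ∈ s <;> by_cases hb : b ∈ s <;> simp [ha, hb, commute_of_adj hab]

theorem retraction_of_mem {s : Set V} {a : V} (ha : a ∈ s) :
    retraction G s (PresentedGroup.of a) = PresentedGroup.of a := by
  simp [retraction, ha]

theorem retraction_of_notMem {s : Set V} {a : V} (ha : a ∉ s) :
    retraction G s (PresentedGroup.of a) = 1 := by
  simp [retraction, ha]

end RAAG

/-- The holomorph `N ⋊ Aut N` of a group `N`. -/
abbrev Holomorph (N : Type*) [Group N] : Type _ :=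
  N ⋊[MonoidHom.id (MulAut N)] MulAut N

namespace Holomorph

variable {N : Type*} [Group N]

theorem inr_mul_inl_mul_inr_inv (σ : MulAut N) (n : N) :
    (SemidirectProduct.inr σ * SemidirectProduct.inl n * (SemidirectProduct.inr σ)⁻¹ :
      Holomorph N) = SemidirectProduct.inl (σ n) := by
  rw [← map_inv, ← SemidirectProduct.inl_aut, MonoidHom.id_apply]

theorem commute_inr_inl {σ : MulAut N} {n : N} (h : σ n = n) :
    Commute (SemidirectProduct.inr σ : Holomorph N) (SemidirectProduct.inl n) := by
  rw [commute_iff_eq, ← mul_inv_eq_iff_eq_mul, inr_mul_inl_mul_inr_inv, h]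

end Holomorph

namespace SubdivEdge

variable {V : Type} {Λ : SimpleGraph V} {v w : V}

theorem compl_adj_some_some (hvw : Λ.Adj v w) {a b : V} :
    (SubdivEdge Λ v w)ᶜ.Adj (some a) (some b) ↔
      Λᶜ.Adj a b ∨ (a = v ∧ b = w) ∨ (a = w ∧ b = v) := by
  have hne := hvw.ne
  have hsymm := Λ.adj_comm a b
  simp only [SubdivEdge, compl_adj, fromRel_adj, ne_eq, Option.some.injEq]
  grind

theorem compl_adj_none_some {a : V} :
    (SubdivEdge Λ v w)ᶜ.Adj none (some a) ↔ a ≠ v ∧ a ≠ w := by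
  simp [SubdivEdge]

/-- The homomorphism `G(Λ) → G(Λ̄)` that conjugates `v` by the new vertex and fixes all the other
generators. -/
def conjHom [DecidableEq V] (hvw : Λ.Adj v w) : GG Λ →* GG (SubdivEdge Λ v w) :=
  RAAG.lift
    (Function.update (fun x => PresentedGroup.of (some x)) v
      (PresentedGroup.of none * PresentedGroup.of (some v) * (PresentedGroup.of none)⁻¹)) <| by
    have commute_of_some {a b : V} (hab : Λᶜ.Adj a b) :
        Commute (PresentedGroup.of (some a) : GG (SubdivEdge Λ v w))
          (PresentedGroup.of (some b)) :=
      RAAG.commute_of_adj ((compl_adj_some_some hvw).mpr (.inl hab))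
    have commute_conj {b : V} (hvb : Λᶜ.Adj v b) :
        Commute (PresentedGroup.of none * PresentedGroup.of (some v) * (PresentedGroup.of none)⁻¹ :
          GG (SubdivEdge Λ v w)) (PresentedGroup.of (some b)) := by
      have hbw : b ≠ w := by
        rintro rfl
        exact hvb.2 hvw
      have hnone : Commute (PresentedGroup.of none : GG (SubdivEdge Λ v w))
          (PresentedGroup.of (some b)) :=
        RAAG.commute_of_adj (compl_adj_none_some.mpr ⟨hvb.ne', hbw⟩)
      exact (hnone.mul_left (commute_of_some hvb)).mul_left hnone.inv_left
    intro a b hab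
    rcases eq_or_ne a v with rfl | hav
    · simpa [hab.ne'] using commute_conj hab
    rcases eq_or_ne b v with rfl | hbv
    · simpa [hab.ne] using (commute_conj hab.symm).symm
    · simpa [hav, hbv] using commute_of_some hab

theorem conjHom_of_self [DecidableEq V] (hvw : Λ.Adj v w) :
    conjHom hvw (PresentedGroup.of v) =
      PresentedGroup.of none * PresentedGroup.of (some v) * (PresentedGroup.of none)⁻¹ := by
  simp [conjHom]

theorem conjHom_of_ne [DecidableEq V] (hvw : Λ.Adj v w) {x : V} (hx : x ≠ v) :
    conjHom hvw (PresentedGroup.of x) = PresentedGroup.of (some x) := by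
  simp [conjHom, hx]

/-- The homomorphism `G(Λ) → G(Λ) × G(Λ)` that sends `v` to `(1, v)`, `w` to `(w, 1)` and every
other generator `x` to `(x, x)`. -/
noncomputable def splitHom (Λ : SimpleGraph V) (v w : V) : GG Λ →* GG Λ × GG Λ :=
  (RAAG.retraction Λᶜ {v}ᶜ).prod (RAAG.retraction Λᶜ {w}ᶜ)

theorem splitHom_of_left (hne : v ≠ w) :
    splitHom Λ v w (PresentedGroup.of v) = (1, PresentedGroup.of v) := by
  simp [splitHom, RAAG.retraction_of_mem, RAAG.retraction_of_notMem, hne]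

theorem splitHom_of_right (hne : v ≠ w) :
    splitHom Λ v w (PresentedGroup.of w) = (PresentedGroup.of w, 1) := by
  simp [splitHom, RAAG.retraction_of_mem, RAAG.retraction_of_notMem, hne.symm]

theorem splitHom_of_ne {x : V} (hxv : x ≠ v) (hxw : x ≠ w) :
    splitHom Λ v w (PresentedGroup.of x) = (PresentedGroup.of x, PresentedGroup.of x) := by
  simp [splitHom, RAAG.retraction_of_mem, hxv, hxw]

/-- The homomorphism from `G(Λ̄)` to the holomorph of `G(Λ) × G(Λ)` that sends the new vertex to the
swap of the two factors and is given by `splitHom` on the vertices of `Λ`. -/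
noncomputable def toHolomorph (hvw : Λ.Adj v w) :
    GG (SubdivEdge Λ v w) →* Holomorph (GG Λ × GG Λ) :=
  RAAG.lift
    (fun x => x.elim (SemidirectProduct.inr MulEquiv.prodComm)
      fun a => SemidirectProduct.inl (splitHom Λ v w (PresentedGroup.of a))) <| by
    have commute_swap {a : V} (ha : (SubdivEdge Λ v w)ᶜ.Adj none (some a)) :
        Commute (SemidirectProduct.inr MulEquiv.prodComm : Holomorph (GG Λ × GG Λ))
          (SemidirectProduct.inl (splitHom Λ v w (PresentedGroup.of a))) := by
      obtain ⟨hav, haw⟩ := compl_adj_none_some.mp ha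
      apply Holomorph.commute_inr_inl
      rw [splitHom_of_ne hav haw]
      rfl
    have commute_left_right : Commute (splitHom Λ v w (PresentedGroup.of v))
        (splitHom Λ v w (PresentedGroup.of w)) := by
      rw [splitHom_of_left hvw.ne, splitHom_of_right hvw.ne]
      exact .prod (.one_left _) (.one_right _)
    rintro (_ | a) (_ | b) hab
    · exact .refl _
    · exact commute_swap hab
    · exact (commute_swap hab.symm).symm
    · apply Commute.map (f := SemidirectProduct.inl)
      rcases (compl_adj_some_some hvw).mp hab with hab | ⟨rfl, rfl⟩ | ⟨rfl, rfl⟩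
      · exact (RAAG.commute_of_adj hab).map _
      · exact commute_left_right
      · exact commute_left_right.symm

theorem toHolomorph_of_none (hvw : Λ.Adj v w) :
    toHolomorph hvw (PresentedGroup.of none) = SemidirectProduct.inr MulEquiv.prodComm :=
  RAAG.lift_of ..

theorem toHolomorph_of_some (hvw : Λ.Adj v w) (a : V) :
    toHolomorph hvw (PresentedGroup.of (some a)) =
      SemidirectProduct.inl (splitHom Λ v w (PresentedGroup.of a)) :=
  RAAG.lift_of ..

theorem toHolomorph_comp_conjHom [DecidableEq V] (hvw : Λ.Adj v w) :
    (toHolomorph hvw).comp (conjHom hvw) =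
      SemidirectProduct.inl.comp ((MonoidHom.id _).prod (RAAG.retraction Λᶜ {v, w}ᶜ)) := by
  ext x : 1
  simp only [MonoidHom.comp_apply, MonoidHom.prod_apply, MonoidHom.id_apply]
  rcases eq_or_ne x v with rfl | hxv
  · rw [conjHom_of_self, map_mul, map_mul, map_inv, toHolomorph_of_none, toHolomorph_of_some,
      Holomorph.inr_mul_inl_mul_inr_inv, splitHom_of_left hvw.ne,
      RAAG.retraction_of_notMem (by simp)]
    rfl
  rw [conjHom_of_ne hvw hxv, toHolomorph_of_some]
  rcases eq_or_ne x w with rfl | hxw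
  · rw [splitHom_of_right hvw.ne, RAAG.retraction_of_notMem (by simp)]
  · rw [splitHom_of_ne hxv hxw, RAAG.retraction_of_mem (by simp [hxv, hxw])]

theorem conjHom_injective [DecidableEq V] (hvw : Λ.Adj v w) :
    Function.Injective (conjHom hvw) := by
  have hcomp : Function.Injective ((toHolomorph hvw).comp (conjHom hvw)) := by
    rw [toHolomorph_comp_conjHom]
    exact SemidirectProduct.inl_injective.comp fun _ _ h => congrArg Prod.fst h
  exact .of_comp hcomp

end SubdivEdge

theorem statement11_general {V : Type} (Λ : SimpleGraph V) (v w : V) (hvw : Λ.Adj v w) :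
    ∃ φ : GG Λ →* GG (SubdivEdge Λ v w), Function.Injective φ := by
  classical exact ⟨SubdivEdge.conjHom hvw, SubdivEdge.conjHom_injective hvw⟩

/-- `G(Λ)` embeds into `G(Λ̄)`, where `Λ̄` is obtained from `Λ` by subdividing the
edge `[v,w]`. -/
theorem statement11 {V : Type} [Fintype V] (Λ : SimpleGraph V) (v w : V)
    (hvw : Λ.Adj v w) :
    ∃ φ : GG Λ →* GG (SubdivEdge Λ v w), Function.Injective φ :=
  statement11_general Λ v w hvw
end

section
/- Let Λ be a finite simple graph with an edge [v,w], and let Λ̄ be the graph obtained from Λ by subdividing the edge [v,w] with a new vertex u (vertex set V(Λ) ∪ {u}; edges those of Λ other than [v,w], together with [v,u] and [u,w]). Then Λᶜ embeds as a full (induced) subgraph into the double D_u((Λ̄)ᶜ) of (Λ̄)ᶜ along the star of u in (Λ̄)ᶜ. -/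
open SimpleGraph

/-!
In `(Λ̄)ᶜ` the only vertices outside the star of `u` are `v` and `w`, and the only edge between
vertices of `Λ` that is not already an edge of `Λᶜ` is `[v, w]`. Replacing `w` by its copy `w'` in
the double keeps the edges from `w` to the star of `u` and destroys those to vertices outside it,
that is, exactly `[v, w]`; so `V(Λ) \ {w} ∪ {w'}` spans a copy of `Λᶜ`.
-/

section GraphDouble

variable {W : Type} {Γ : SimpleGraph W} {x : W}

@[simp]
lemma GraphDouble.adj_inl_inl {a b : W} :
    (GraphDouble Γ x).Adj (Sum.inl a) (Sum.inl b) ↔ Γ.Adj a b := by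
  simp only [GraphDouble, fromRel_adj, ne_eq, Sum.inl.injEq, Γ.adj_comm b a, or_self,
    and_iff_right_iff_imp]
  exact Adj.ne

@[simp]
lemma GraphDouble.adj_inr_inr {a b : {w : W // w ∉ starSet Γ x}} :
    (GraphDouble Γ x).Adj (Sum.inr a) (Sum.inr b) ↔ Γ.Adj a b := by
  simp only [GraphDouble, fromRel_adj, ne_eq, Sum.inr.injEq, Γ.adj_comm b a, or_self,
    and_iff_right_iff_imp]
  exact fun hab h => hab.ne (congrArg Subtype.val h)

@[simp]
lemma GraphDouble.adj_inl_inr {a : W} {b : {w : W // w ∉ starSet Γ x}} :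
    (GraphDouble Γ x).Adj (Sum.inl a) (Sum.inr b) ↔ a ∈ starSet Γ x ∧ Γ.Adj a b := by
  simp [GraphDouble]

@[simp]
lemma GraphDouble.adj_inr_inl {a : {w : W // w ∉ starSet Γ x}} {b : W} :
    (GraphDouble Γ x).Adj (Sum.inr a) (Sum.inl b) ↔ b ∈ starSet Γ x ∧ Γ.Adj a b := by
  rw [adj_comm, adj_inl_inr, Γ.adj_comm]

/-- The section of the folding map `D_x(Γ) → Γ` that sends the vertices of a set `S` disjoint from
the star of `x` to their copies, and every other vertex to itself. -/
def GraphDouble.sectionOn (S : Set W) [DecidablePred (· ∈ S)] (hS : Disjoint S (starSet Γ x))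
    (a : W) : W ⊕ {w : W // w ∉ starSet Γ x} :=
  if ha : a ∈ S then Sum.inr ⟨a, hS.notMem_of_mem_left ha⟩ else Sum.inl a

variable {S : Set W} [DecidablePred (· ∈ S)] (hS : Disjoint S (starSet Γ x))

lemma GraphDouble.sectionOn_injective : Function.Injective (sectionOn S hS) := by
  have fold_sectionOn : Function.LeftInverse (Sum.elim id Subtype.val) (sectionOn S hS) := by
    intro a
    by_cases ha : a ∈ S <;> simp [sectionOn, ha]
  exact fold_sectionOn.injective

lemma GraphDouble.adj_sectionOn {a b : W} :
    (GraphDouble Γ x).Adj (sectionOn S hS a) (sectionOn S hS b) ↔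
      Γ.Adj a b ∧ (a ∈ S → b ∉ S → b ∈ starSet Γ x) ∧ (b ∈ S → a ∉ S → a ∈ starSet Γ x) := by
  by_cases ha : a ∈ S <;> by_cases hb : b ∈ S <;> simp [sectionOn, ha, hb, and_comm]

end GraphDouble

section SubdivEdge

variable {V : Type} {Λ : SimpleGraph V} {v w : V}

lemma SubdivEdge.adj_some_some {a b : V} :
    (SubdivEdge Λ v w).Adj (some a) (some b) ↔ Λ.Adj a b ∧ s(a, b) ≠ s(v, w) := by
  have hne : Λ.Adj a b → a ≠ b := Adj.ne
  simp only [SubdivEdge, fromRel_adj, ne_eq, Option.some.injEq, Sym2.eq_iff, Λ.adj_comm b a]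
  tauto

lemma SubdivEdge.adj_none_some {a : V} :
    (SubdivEdge Λ v w).Adj none (some a) ↔ a = v ∨ a = w := by
  simp [SubdivEdge]

lemma SubdivEdge.compl_adj_some_some_s12 {a b : V} :
    (SubdivEdge Λ v w)ᶜ.Adj (some a) (some b) ↔ a ≠ b ∧ (Λ.Adj a b → s(a, b) = s(v, w)) := by
  simp only [compl_adj, adj_some_some, ne_eq, Option.some.injEq, not_and, not_not]

lemma SubdivEdge.some_mem_starSet_compl_none {a : V} :
    some a ∈ starSet (SubdivEdge Λ v w)ᶜ none ↔ a ≠ v ∧ a ≠ w := by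
  simp [starSet, adj_none_some]

lemma SubdivEdge.disjoint_singleton_starSet_compl_none :
    Disjoint {some w} (starSet (SubdivEdge Λ v w)ᶜ none) := by
  simp [some_mem_starSet_compl_none]

lemma GraphDouble.adj_sectionOn_compl_subdivEdge [DecidablePred (· ∈ ({some w} : Set (Option V)))]
    (hvw : Λ.Adj v w) (hS : Disjoint {some w} (starSet (SubdivEdge Λ v w)ᶜ none)) {a b : V} :
    (GraphDouble (SubdivEdge Λ v w)ᶜ none).Adj
        (sectionOn {some w} hS (some a)) (sectionOn {some w} hS (some b)) ↔ Λᶜ.Adj a b := by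
  rw [adj_sectionOn, SubdivEdge.compl_adj_some_some_s12, compl_adj]
  simp only [SubdivEdge.some_mem_starSet_compl_none, Set.mem_singleton_iff, Option.some.injEq]
  constructor
  · rintro ⟨⟨hab, eq_vw_of_adj⟩, mem_star_right, mem_star_left⟩
    refine ⟨hab, fun hadj => ?_⟩
    obtain ⟨rfl, rfl⟩ | ⟨rfl, rfl⟩ := Sym2.eq_iff.mp (eq_vw_of_adj hadj)
    · exact (mem_star_left rfl hab).1 rfl
    · exact (mem_star_right rfl hab.symm).1 rfl
  · rintro ⟨hab, hnadj⟩
    refine ⟨⟨hab, fun hadj => absurd hadj hnadj⟩, ?_, ?_⟩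
    · rintro rfl hb
      exact ⟨fun hbv => hnadj (hbv ▸ hvw.symm), hb⟩
    · rintro rfl ha
      exact ⟨fun hav => hnadj (hav ▸ hvw), ha⟩

end SubdivEdge

theorem statement12_general {V : Type} (Λ : SimpleGraph V) (v w : V) (hvw : Λ.Adj v w) :
    Nonempty (Λᶜ ↪g GraphDouble (SubdivEdge Λ v w)ᶜ (none : Option V)) := by
  classical
  have hS : Disjoint {some w} (starSet (SubdivEdge Λ v w)ᶜ none) :=
    SubdivEdge.disjoint_singleton_starSet_compl_none
  have hinj : Function.Injective (GraphDouble.sectionOn {some w} hS ∘ some) :=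
    (GraphDouble.sectionOn_injective hS).comp (Option.some_injective V)
  exact ⟨⟨⟨_, hinj⟩, GraphDouble.adj_sectionOn_compl_subdivEdge hvw hS⟩⟩

/-- `Λᶜ` embeds as an induced subgraph into the double of `(Λ̄)ᶜ` along the star of
the subdivision vertex `u`, where `Λ̄` is `Λ` with the edge `[v,w]` subdivided. -/
theorem statement12 {V : Type} [Fintype V] (Λ : SimpleGraph V) (v w : V)
    (hvw : Λ.Adj v w) :
    Nonempty (Λᶜ ↪g GraphDouble (SubdivEdge Λ v w)ᶜ (none : Option V)) :=
  statement12_general Λ v w hvw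
end

section
/- Suppose Λ is a finite simple graph that is not a linear forest and every vertex of Λ has degree at most 2. Then there exists a finite simple graph Γ such that there is an injective group homomorphism from G(Λ) into G(Γ), but Λ does not embed into Γ as a full (induced) subgraph. -/
open SimpleGraph

/-!
Take for `Γ` the full subdivision of `Λ`: every edge of `Λ` receives a midpoint.

Adjacent vertices of `Γ` lie on different sides of the bipartition into old vertices and
midpoints. A finite vertex set in which every vertex has two neighbours loses its midpoints on
passing from `Γ` back to `Λ` and keeps this property. So a graph with a cycle cannot be a subgraph
of its own full subdivision, because a smallest such set could be shrunk further.

For the embedding of groups, fix an orientation of `Λ` with finite out-degrees, and send a vertex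
`v` to its conjugate by the product of the midpoints of the edges leaving `v`. To see that this is
injective, let `G(Γ)` act on pairs of an orientation of `Λ` and an element of `G(Λ)`: a midpoint
reverses its edge, and `v` multiplies the group element by `v` if the orientation has a sink at
`v`, and does nothing otherwise. Adjacent vertices are never sinks simultaneously, so this is an
action; conjugation turns `v` into a sink, so `G(Λ)` acts by left multiplication over the chosen
orientation.
-/

section Subdivision

variable {V W : Type*}

/-- The full subdivision of `G`, in which each edge is replaced by a path of length two through a
new vertex. The old vertices are on the left, the midpoints of the edges on the right. -/
def fullSubdivision (G : SimpleGraph V) : SimpleGraph (V ⊕ G.edgeSet) where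
  Adj
    | .inl v, .inr e => v ∈ (e : Sym2 V)
    | .inr e, .inl v => v ∈ (e : Sym2 V)
    | _, _ => False
  symm := ⟨by rintro (_ | _) (_ | _) h <;> exact h⟩
  loopless := ⟨by rintro (_ | _) h <;> exact h⟩

@[simp]
theorem fullSubdivision_adj_inl_inl {G : SimpleGraph V} {v w : V} :
    ¬ (fullSubdivision G).Adj (.inl v) (.inl w) := id

@[simp]
theorem fullSubdivision_adj_inr_inr {G : SimpleGraph V} {e e' : G.edgeSet} :
    ¬ (fullSubdivision G).Adj (.inr e) (.inr e') := id

@[simp]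
theorem fullSubdivision_adj_inl_inr {G : SimpleGraph V} {v : V} {e : G.edgeSet} :
    (fullSubdivision G).Adj (.inl v) (.inr e) ↔ v ∈ (e : Sym2 V) := Iff.rfl

@[simp]
theorem fullSubdivision_adj_inr_inl {G : SimpleGraph V} {v : V} {e : G.edgeSet} :
    (fullSubdivision G).Adj (.inr e) (.inl v) ↔ v ∈ (e : Sym2 V) := Iff.rfl

/-- A nonempty finite set of vertices each of which has at least two neighbours in the set: a finite
witness for the existence of a cycle that is easier to transport than a closed walk. -/
structure IsTwoCore (G : SimpleGraph V) (S : Finset V) : Prop where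
  nonempty : S.Nonempty
  nontrivial_neighbors : ∀ v ∈ S, (G.neighborSet v ∩ S).Nontrivial

open Classical in
theorem isTwoCore_support_of_isCycle {G : SimpleGraph V} {u : V} {p : G.Walk u u}
    (hp : p.IsCycle) : IsTwoCore G p.support.toFinset where
  nonempty := ⟨u, by simp⟩
  nontrivial_neighbors v hv := by
    have hcard := hp.ncard_neighborSet_toSubgraph_eq_two (List.mem_toFinset.1 hv)
    have hnontrivial : (p.toSubgraph.neighborSet v).Nontrivial :=
      Set.one_lt_ncard_iff_nontrivial_and_finite.1 (hcard ▸ one_lt_two) |>.1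
    refine hnontrivial.mono fun w hw => ⟨hw.adj_sub, ?_⟩
    simpa using hw.snd_mem

namespace IsTwoCore

theorem map {G : SimpleGraph V} {H : SimpleGraph W} {S : Finset V} (hS : IsTwoCore G S)
    (f : G.Copy H) : IsTwoCore H (S.map f.toEmbedding) where
  nonempty := hS.nonempty.map
  nontrivial_neighbors := by
    refine Finset.forall_mem_map.2 fun v hv => ?_
    refine ((hS.nontrivial_neighbors v hv).image f.injective).mono ?_
    rintro _ ⟨w, ⟨hvw, hw⟩, rfl⟩
    exact ⟨f.toHom.map_adj hvw, Finset.mem_map_of_mem _ hw⟩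

variable {G : SimpleGraph V} {S : Finset (V ⊕ G.edgeSet)}

theorem inl_mem_of_mem_edge (hS : IsTwoCore (fullSubdivision G) S) {e : G.edgeSet}
    (he : .inr e ∈ S) {v : V} (hv : v ∈ (e : Sym2 V)) : .inl v ∈ S := by
  obtain ⟨a | _, ⟨ha, haS⟩, b | _, ⟨hb, hbS⟩, hab⟩ := hS.nontrivial_neighbors _ he
  · have hedge : (e : Sym2 V) = s(a, b) := (Sym2.mem_and_mem_iff (by simpa using hab)).1
      ⟨fullSubdivision_adj_inr_inl.1 ha, fullSubdivision_adj_inr_inl.1 hb⟩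
    rcases Sym2.mem_iff.1 (hedge ▸ hv) with rfl | rfl
    exacts [haS, hbS]
  all_goals simp_all

theorem exists_two_edges (hS : IsTwoCore (fullSubdivision G) S) {v : V} (hv : .inl v ∈ S) :
    ∃ e e' : G.edgeSet, e ≠ e' ∧ (v ∈ (e : Sym2 V) ∧ .inr e ∈ S) ∧
      (v ∈ (e' : Sym2 V) ∧ .inr e' ∈ S) := by
  obtain ⟨_ | e, he, _ | e', he', hne⟩ := hS.nontrivial_neighbors _ hv
  · simp at he
  · simp at he
  · simp at he'
  · exact ⟨e, e', by simpa using hne, ⟨fullSubdivision_adj_inl_inr.1 he.1, he.2⟩,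
      ⟨fullSubdivision_adj_inl_inr.1 he'.1, he'.2⟩⟩

theorem exists_inl_mem (hS : IsTwoCore (fullSubdivision G) S) : ∃ v, .inl v ∈ S := by
  obtain ⟨v | e, hx⟩ := hS.nonempty
  · exact ⟨v, hx⟩
  · exact ⟨_, hS.inl_mem_of_mem_edge hx (Sym2.out_fst_mem (e : Sym2 V))⟩

theorem toLeft (hS : IsTwoCore (fullSubdivision G) S) : IsTwoCore G S.toLeft where
  nonempty := hS.exists_inl_mem.imp fun _ => Finset.mem_toLeft.2
  nontrivial_neighbors v hv := by
    obtain ⟨⟨e, hadj⟩, ⟨e', hadj'⟩, hne, ⟨hve, heS⟩, hve', heS'⟩ :=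
      hS.exists_two_edges (Finset.mem_toLeft.1 hv)
    obtain ⟨w, rfl⟩ := Sym2.mem_iff_exists.1 hve
    obtain ⟨w', rfl⟩ := Sym2.mem_iff_exists.1 hve'
    have hw : .inl w ∈ S := hS.inl_mem_of_mem_edge heS (Sym2.mem_mk_right v w)
    have hw' : .inl w' ∈ S := hS.inl_mem_of_mem_edge heS' (Sym2.mem_mk_right v w')
    exact ⟨w, ⟨hadj, Finset.mem_toLeft.2 hw⟩, w', ⟨hadj', Finset.mem_toLeft.2 hw'⟩,
      fun hww' => hne (by simp [hww'])⟩

theorem card_toLeft_lt (hS : IsTwoCore (fullSubdivision G) S) : S.toLeft.card < S.card := by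
  obtain ⟨v, hv⟩ := hS.exists_inl_mem
  obtain ⟨e, _, _, ⟨_, he⟩, _⟩ := hS.exists_two_edges hv
  have hpos : 0 < S.toRight.card := Finset.card_pos.2 ⟨e, Finset.mem_toRight.2 he⟩
  have hcard := S.card_toLeft_add_card_toRight
  omega

end IsTwoCore

theorem free_fullSubdivision {G : SimpleGraph V} (hG : ¬ G.IsAcyclic) :
    G.Free (fullSubdivision G) := by
  rintro ⟨f⟩
  have no_core (S : Finset V) : ¬ IsTwoCore G S := by
    induction hn : S.card using Nat.strong_induction_on generalizing S with
    | _ n ih =>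
      intro hS
      have hlt := (hS.map f).card_toLeft_lt
      rw [Finset.card_map, hn] at hlt
      exact ih _ hlt _ rfl (hS.map f).toLeft
  exact hG fun _ _ hp => no_core _ (isTwoCore_support_of_isCycle hp)

end Subdivision

theorem injective_of_map_apply_eq_mul {G Y : Type*} [Group G] {s : Set G}
    (hs : Subgroup.closure s = ⊤) (ρ : G →* Equiv.Perm Y) {ι : G → Y}
    (hι : Function.Injective ι) (hρ : ∀ a ∈ s, ∀ g, ρ a (ι g) = ι (a * g)) :
    Function.Injective ρ := by
  have equivariant (a g : G) : ρ a (ι g) = ι (a * g) := by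
    have ha : a ∈ Subgroup.closure s := hs ▸ Subgroup.mem_top a
    induction ha using Subgroup.closure_induction generalizing g with
    | mem a ha => exact hρ a ha g
    | one => simp
    | mul a b _ _ iha ihb => rw [map_mul, Equiv.Perm.mul_apply, ihb, iha, mul_assoc]
    | inv a _ iha => rw [map_inv, Equiv.Perm.inv_eq_iff_eq, iha, mul_inv_cancel_left]
  intro a b hab
  have hι_eq : ι (a * 1) = ι (b * 1) := by rw [← equivariant, ← equivariant, hab]
  simpa using hι hι_eq

section Presentation

open scoped commutatorElement

variable {V : Type} {G : SimpleGraph V} {H : Type*} [Group H]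

theorem RAAG.commute_of {u v : V} (h : G.Adj u v) :
    Commute (PresentedGroup.of u : RAAG G) (PresentedGroup.of v) := by
  have hrel : PresentedGroup.mk (raagRels G) ⁅FreeGroup.of u, FreeGroup.of v⁆ = 1 :=
    PresentedGroup.one_of_mem ⟨u, v, h, rfl⟩
  rw [map_commutatorElement] at hrel
  exact commutatorElement_eq_one_iff_commute.1 hrel

namespace GG

theorem commute_of {u v : V} (h : ¬ G.Adj u v) :
    Commute (PresentedGroup.of u : GG G) (PresentedGroup.of v) := by
  obtain rfl | huv := eq_or_ne u v
  · exact Commute.refl _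
  · exact RAAG.commute_of ((G.compl_adj u v).2 ⟨huv, h⟩)

theorem lift_rels_eq_one {f : V → H} (hf : ∀ ⦃u v⦄, Gᶜ.Adj u v → Commute (f u) (f v)) :
    ∀ r ∈ raagRels Gᶜ, FreeGroup.lift f r = 1 := by
  rintro _ ⟨u, v, huv, rfl⟩
  rw [← commutatorElement_def, map_commutatorElement, FreeGroup.lift_apply_of,
    FreeGroup.lift_apply_of]
  exact commutatorElement_eq_one_iff_commute.2 (hf huv)

/-- The homomorphism out of `G(Γ)` given by its universal property. -/
def lift (f : V → H) (hf : ∀ ⦃u v⦄, Gᶜ.Adj u v → Commute (f u) (f v)) : GG G →* H :=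
  PresentedGroup.toGroup (lift_rels_eq_one hf)

@[simp]
theorem lift_of {f : V → H} (hf : ∀ ⦃u v⦄, Gᶜ.Adj u v → Commute (f u) (f v)) (v : V) :
    lift f hf (PresentedGroup.of v) = f v :=
  PresentedGroup.toGroup.of (lift_rels_eq_one hf)

end GG

end Presentation

section ReverseEdge

variable {E H : Type*}

/-- Reversal of the edge `e` of an oriented graph with edge set `E`. The component
`x : Set E` records the edges whose direction differs from that in a reference orientation; `H` is
carried along. -/
def reverseEdge (e : E) : Equiv.Perm (Set E × H) :=
  Equiv.prodCongr (symmDiff_left_involutive {e}).toPerm (Equiv.refl H)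

theorem reverseEdge_apply (e : E) (p : Set E × H) :
    reverseEdge e p = (symmDiff p.1 {e}, p.2) := rfl

theorem commute_reverseEdge (e e' : E) :
    Commute (reverseEdge e : Equiv.Perm (Set E × H)) (reverseEdge e') :=
  Equiv.ext fun p => Prod.ext (symmDiff_right_comm p.1 {e'} {e}) rfl

theorem noncommProd_reverseEdge_apply (s : Finset E) (x : Set E) (h : H) :
    s.noncommProd reverseEdge (Set.pairwise_of_forall _ _ commute_reverseEdge) (x, h) =
      (symmDiff x s, h) := by
  classical
  induction s using Finset.induction_on with
  | empty => simp [← Set.bot_eq_empty]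
  | insert e s he ih =>
    have hinsert : symmDiff (s : Set E) {e} = (insert e s : Finset E) := by
      ext e'
      simp only [Set.mem_symmDiff, Set.mem_singleton_iff, Finset.mem_coe, Finset.mem_insert]
      grind
    rw [Finset.noncommProd_insert_of_notMem _ _ _ _ he, Equiv.Perm.mul_apply, ih,
      reverseEdge_apply, symmDiff_assoc, hinsert]

end ReverseEdge

/-- An orientation of `G`, given by choosing the tail of each edge. -/
structure EdgeOrientation {V : Type*} (G : SimpleGraph V) where
  tail : G.edgeSet → V
  tail_mem : ∀ e : G.edgeSet, tail e ∈ (e : Sym2 V)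

namespace EdgeOrientation

section Sinks

variable {V : Type*} {G : SimpleGraph V} (o : EdgeOrientation G)

/-- The edges leaving `v`. -/
def outEdges (v : V) : Set G.edgeSet := {e | o.tail e = v}

theorem mem_of_mem_outEdges {v : V} {e : G.edgeSet} (he : e ∈ o.outEdges v) : v ∈ (e : Sym2 V) :=
  he ▸ o.tail_mem e

/-- Orienting each edge towards its earlier endpoint in an enumeration of the vertices. -/
theorem exists_finite_outEdges [Countable V] (G : SimpleGraph V) :
    ∃ o : EdgeOrientation G, ∀ v, (o.outEdges v).Finite := by
  obtain ⟨rank, hrank⟩ := Countable.exists_injective_nat V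
  have exists_later_endpoint (z : Sym2 V) : ∃ v ∈ z, ∀ w ∈ z, rank w ≤ rank v := by
    induction z with
    | _ a b => rcases le_total (rank a) (rank b) with h | h <;> simp [h]
  choose tail htail rank_le using exists_later_endpoint
  refine ⟨⟨fun e => tail e, fun e => htail e⟩, fun v => ?_⟩
  have hfinite : {w | rank w ≤ rank v}.Finite := (Set.finite_Iic _).preimage hrank.injOn
  refine Set.Finite.of_finite_image ((hfinite.image (s(v, ·))).subset ?_)
    Subtype.val_injective.injOn
  rintro _ ⟨e, rfl, rfl⟩
  obtain ⟨w, hw⟩ := Sym2.mem_iff_exists.1 (htail e)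
  exact ⟨w, rank_le e w (hw ▸ Sym2.mem_mk_right _ w), hw.symm⟩

/-- After the edges in `x` have been reversed, all edges at `v` point towards `v`. -/
def IsSink (x : Set G.edgeSet) (v : V) : Prop :=
  ∀ e : G.edgeSet, v ∈ (e : Sym2 V) → (e ∈ x ↔ o.tail e = v)

theorem isSink_outEdges (v : V) : o.IsSink (o.outEdges v) v := fun _ _ => Iff.rfl

variable {o}

theorem IsSink.not_adj {x : Set G.edgeSet} {u v : V} (hu : o.IsSink x u) (hv : o.IsSink x v) :
    ¬ G.Adj u v := by
  intro huv
  let e : G.edgeSet := ⟨s(u, v), huv⟩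
  have hu_iff : e ∈ x ↔ o.tail e = u := hu e (Sym2.mem_mk_left u v)
  have hv_iff : e ∈ x ↔ o.tail e = v := hv e (Sym2.mem_mk_right u v)
  have htail : o.tail e = u ∨ o.tail e = v := Sym2.mem_iff.1 (o.tail_mem e)
  have hne := huv.ne
  grind

theorem isSink_symmDiff_singleton {x : Set G.edgeSet} {v : V} {e : G.edgeSet}
    (hv : v ∉ (e : Sym2 V)) : o.IsSink (symmDiff x {e}) v ↔ o.IsSink x v := by
  refine forall₂_congr fun e' he' => ?_
  have hne : e' ≠ e := by rintro rfl; exact hv he'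
  simp [Set.mem_symmDiff, hne]

end Sinks

variable {V : Type} {G : SimpleGraph V} (o : EdgeOrientation G)

open Classical in
/-- Multiplication by `v` over the orientations that have a sink at `v`. -/
noncomputable def mulAtSink (v : V) : Equiv.Perm (Set G.edgeSet × GG G) :=
  Equiv.prodCongrRight fun x =>
    Equiv.mulLeft (if o.IsSink x v then PresentedGroup.of v else 1)

open Classical in
theorem mulAtSink_apply (v : V) (p : Set G.edgeSet × GG G) :
    o.mulAtSink v p = (p.1, (if o.IsSink p.1 v then PresentedGroup.of v else 1) * p.2) := rfl

theorem mulAtSink_apply_of_isSink {v : V} {x : Set G.edgeSet} (hv : o.IsSink x v) (g : GG G) :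
    o.mulAtSink v (x, g) = (x, PresentedGroup.of v * g) := by
  rw [mulAtSink_apply, if_pos hv]

theorem commute_mulAtSink (u v : V) : Commute (o.mulAtSink u) (o.mulAtSink v) := by
  refine Equiv.ext fun ⟨x, g⟩ => ?_
  by_cases hu : o.IsSink x u <;> by_cases hv : o.IsSink x v <;>
    simp only [Equiv.Perm.mul_apply, mulAtSink_apply, hu, hv, if_true, if_false, one_mul]
  rw [(GG.commute_of (hu.not_adj hv)).left_comm]

theorem commute_mulAtSink_reverseEdge {v : V} {e : G.edgeSet} (hv : v ∉ (e : Sym2 V)) :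
    Commute (o.mulAtSink v) (reverseEdge e) := by
  refine Equiv.ext fun p => ?_
  rw [Equiv.Perm.mul_apply, Equiv.Perm.mul_apply, mulAtSink_apply, reverseEdge_apply,
    reverseEdge_apply, mulAtSink_apply]
  dsimp only
  rw [isSink_symmDiff_singleton hv]

/-- The action of `G(Γ)`, for `Γ` the full subdivision, on pairs of an orientation and an element
of `G(Λ)`. -/
noncomputable def sinkAction :
    GG (fullSubdivision G) →* Equiv.Perm (Set G.edgeSet × GG G) :=
  GG.lift (Sum.elim o.mulAtSink reverseEdge) <| by
    rintro (u | e) (v | e') ⟨-, hadj⟩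
    · exact o.commute_mulAtSink u v
    · exact o.commute_mulAtSink_reverseEdge (mt fullSubdivision_adj_inl_inr.2 hadj)
    · exact (o.commute_mulAtSink_reverseEdge (mt fullSubdivision_adj_inr_inl.2 hadj)).symm
    · exact commute_reverseEdge e e'

variable {o} (hfin : ∀ v, (o.outEdges v).Finite)

/-- The product of the midpoints of the edges leaving `v`. -/
noncomputable def outProd (v : V) : GG (fullSubdivision G) :=
  (hfin v).toFinset.noncommProd (fun e => PresentedGroup.of (.inr e))
    (Set.pairwise_of_forall _ _ fun _ _ => GG.commute_of fullSubdivision_adj_inr_inr)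

theorem commute_outProd (u v : V) : Commute (outProd hfin u) (outProd hfin v) :=
  Finset.noncommProd_commute _ _ _ _ fun _ _ =>
    (Finset.noncommProd_commute _ _ _ _ fun _ _ =>
      GG.commute_of fullSubdivision_adj_inr_inr).symm

theorem commute_of_inl_outProd {u v : V} (h : Gᶜ.Adj u v) :
    Commute (PresentedGroup.of (.inl u)) (outProd hfin v) := by
  refine Finset.noncommProd_commute _ _ _ _ fun e he => GG.commute_of fun hu => ?_
  have hv : v ∈ (e : Sym2 V) := o.mem_of_mem_outEdges ((hfin v).mem_toFinset.1 he)
  have hedge : (e : Sym2 V) = s(u, v) := (Sym2.mem_and_mem_iff h.ne).1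
    ⟨fullSubdivision_adj_inl_inr.1 hu, hv⟩
  exact ((G.compl_adj u v).1 h).2 (G.mem_edgeSet.1 (hedge ▸ e.2))

theorem sinkAction_outProd_apply (v : V) (x : Set G.edgeSet) (g : GG G) :
    o.sinkAction (outProd hfin v) (x, g) = (symmDiff x (o.outEdges v), g) := by
  have hgen (e : G.edgeSet) : o.sinkAction (PresentedGroup.of (.inr e)) = reverseEdge e :=
    GG.lift_of _ _
  rw [outProd, Finset.map_noncommProd]
  simp only [hgen, noncommProd_reverseEdge_apply, Set.Finite.coe_toFinset]

/-- The homomorphism from `G(Λ)` to `G(Γ)`, for `Γ` the full subdivision, that conjugates each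
vertex by the product of the midpoints of the edges leaving it. -/
noncomputable def conjHom : GG G →* GG (fullSubdivision G) :=
  GG.lift (fun v => (outProd hfin v)⁻¹ * PresentedGroup.of (.inl v) * outProd hfin v) <| by
    intro u v huv
    have hof : Commute (PresentedGroup.of (.inl u) : GG (fullSubdivision G))
        (PresentedGroup.of (.inl v)) := GG.commute_of fullSubdivision_adj_inl_inl
    have huv' := commute_of_inl_outProd hfin huv
    have hvu' := (commute_of_inl_outProd hfin huv.symm).symm
    have hout := commute_outProd hfin u v
    have hu := (huv'.inv_right.mul_right hof).mul_right huv'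
    have hout_u := (hout.inv_right.mul_right hvu').mul_right hout
    exact (hout_u.inv_left.mul_left hu).mul_left hout_u

theorem sinkAction_conjHom_of_apply (v : V) (g : GG G) :
    o.sinkAction (conjHom hfin (PresentedGroup.of v)) (∅, g) = (∅, PresentedGroup.of v * g) := by
  have hgen : o.sinkAction (PresentedGroup.of (.inl v)) = o.mulAtSink v := GG.lift_of _ _
  have hout (h : GG G) : o.sinkAction (outProd hfin v) (∅, h) = (o.outEdges v, h) := by
    rw [sinkAction_outProd_apply, ← Set.bot_eq_empty, bot_symmDiff]
  rw [conjHom, GG.lift_of, map_mul, map_mul, map_inv, hgen, Equiv.Perm.mul_apply,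
    Equiv.Perm.mul_apply, Equiv.Perm.inv_eq_iff_eq, hout, hout,
    mulAtSink_apply_of_isSink _ (o.isSink_outEdges v)]

theorem conjHom_injective : Function.Injective (conjHom hfin) := by
  have hcomp : Function.Injective (o.sinkAction.comp (conjHom hfin)) := by
    refine injective_of_map_apply_eq_mul (PresentedGroup.closure_range_of _) _
      (Prod.mk_right_injective ∅) ?_
    rintro _ ⟨v, rfl⟩ g
    exact sinkAction_conjHom_of_apply hfin v g
  exact Function.Injective.of_comp (f := o.sinkAction) hcomp

end EdgeOrientation

theorem statement13_general {V : Type} [Countable V] (Λ : SimpleGraph V) (hΛ : ¬ Λ.IsAcyclic) :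
    (∃ φ : GG Λ →* GG (fullSubdivision Λ), Function.Injective φ) ∧
      Λ.Free (fullSubdivision Λ) := by
  obtain ⟨o, hfin⟩ := EdgeOrientation.exists_finite_outEdges Λ
  exact ⟨⟨_, EdgeOrientation.conjHom_injective hfin⟩, free_fullSubdivision hΛ⟩

/-- If `Λ` is not a linear forest and has maximum degree at most 2, then there is a
finite graph `Γ` with `G(Λ) ↪ G(Γ)` but `Λ` not an induced subgraph of `Γ`. -/
theorem statement13 {V : Type} [Fintype V] (Λ : SimpleGraph V)
    (hΛ : ¬ IsLinearForest Λ) (hdeg : ∀ v : V, (Λ.neighborSet v).ncard ≤ 2) :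
    ∃ (W : Type) (_ : Fintype W) (Γ : SimpleGraph W),
      (∃ φ : GG Λ →* GG Γ, Function.Injective φ) ∧ ¬ Nonempty (Λ ↪g Γ) :=
  have ⟨hφ, hfree⟩ := statement13_general Λ fun h => hΛ ⟨h, hdeg⟩
  ⟨_, Fintype.ofFinite _, fullSubdivision Λ, hφ, fun ⟨f⟩ => hfree f.isContained⟩
end
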